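/- For the unit square grid (a = b = 1), let ℓ > 0. For every odd integer N ≥ 3: M(ℓ) = N if and only if (N−3)/√2 < ℓ ≤ √((N−3)² + (N−1)²)/2. For every even integer N ≥ 4: M(ℓ) = N if and only if √((N−4)² + (N−2)²)/2 < ℓ ≤ (N−2)/√2. -/

import Mathlib

open Set

/-- Interior of the tile `T(k,l)` of the `a×b` grid. -/
noncomputable def tileInt (a b : ℝ) (k l : ℤ) : Set (ℝ × ℝ) :=
  Set.Ioo ((k : ℝ) * a) (((k : ℝ) + 1) * a) ×ˢ Set.Ioo ((l : ℝ) * b) (((l : ℝ) + 1) * b)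

/-- Number of tiles of the `a×b` grid visited by the closed segment with endpoints `p`, `q`. -/
noncomputable def visitCount (a b : ℝ) (p q : ℝ × ℝ) : ℕ :=
  Set.ncard {kl : ℤ × ℤ | (segment ℝ p q ∩ tileInt a b kl.1 kl.2).Nonempty}

/-- Normalized width of the discrete bounding rectangle of the segment with endpoints `p`, `q`. -/
noncomputable def normWidth (a : ℝ) (p q : ℝ × ℝ) : ℤ :=
  ⌈max p.1 q.1 / a⌉ - ⌊min p.1 q.1 / a⌋

/-- Normalized height of the discrete bounding rectangle of the segment with endpoints `p`, `q`. -/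
noncomputable def normHeight (b : ℝ) (p q : ℝ × ℝ) : ℤ :=
  ⌈max p.2 q.2 / b⌉ - ⌊min p.2 q.2 / b⌋

/-- Euclidean length of the segment with endpoints `p`, `q`. -/
noncomputable def segLen (p q : ℝ × ℝ) : ℝ :=
  Real.sqrt ((p.1 - q.1) ^ 2 + (p.2 - q.2) ^ 2)

/-- `maxTiles a b ℓ` : maximum number of tiles of the `a×b` grid visited by a segment of length `ℓ`. -/
noncomputable def maxTiles (a b ℓ : ℝ) : ℕ :=
  sSup {n : ℕ | ∃ p q : ℝ × ℝ, segLen p q = ℓ ∧ visitCount a b p q = n}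

/-- `infLen a b N` : infimum of lengths of segments visiting at least `N` tiles of the `a×b` grid. -/
noncomputable def infLen (a b : ℝ) (N : ℕ) : ℝ :=
  sInf {ℓ : ℝ | 0 < ℓ ∧ ∃ p q : ℝ × ℝ, segLen p q = ℓ ∧ N ≤ visitCount a b p q}

/-- `minIntLen N` : minimum positive integer length of a segment visiting at least `N` tiles
of the unit square grid. -/
noncomputable def minIntLen (N : ℕ) : ℕ :=
  sInf {L : ℕ | 1 ≤ L ∧ ∃ p q : ℝ × ℝ, segLen p q = (L : ℝ) ∧ N ≤ visitCount 1 1 p q}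

/-!
Rescale the grid to the unit one. Along a segment both coordinates are monotone, so up to signs
`k + l` is injective on the visited tiles `(k, l)`; as it varies by at most
`⌈|Δx| / a⌉ + ⌈|Δy| / b⌉`, this bounds the number of visited tiles. Conversely, a segment running
from just below the lattice point `(0, 0)` to just above `(i, j)` and avoiding all lattice points
crosses the grid lines one at a time, so `k + l` takes every value from `-2` to `i + j`. Hence some
segment of length `ℓ` visits at least `N` tiles iff `(i a)² + (j b)² < ℓ²` for some naturals `i, j`
with `N ≤ i + j + 3`. On the unit grid the best choice of `i, j` is the most balanced one, and the
two parities of `N` give the two thresholds.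
-/

open AffineMap (lineMap)
open Filter Topology

section VisitedTiles

/-- The tiles of the `a×b` grid visited by the segment with endpoints `p`, `q`, i.e. the set whose
cardinality is `visitCount a b p q`. -/
def visitedTiles (a b : ℝ) (p q : ℝ × ℝ) : Set (ℤ × ℤ) :=
  {kl : ℤ × ℤ | (segment ℝ p q ∩ tileInt a b kl.1 kl.2).Nonempty}

variable {a b : ℝ} {p q : ℝ × ℝ}

lemma visitedTiles_mono {p' q' : ℝ × ℝ} (h : segment ℝ p q ⊆ segment ℝ p' q') :
    visitedTiles a b p q ⊆ visitedTiles a b p' q' :=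
  fun _ hkl => hkl.mono (inter_subset_inter_left _ h)

lemma mem_Ioo_mul_iff_div_mem_Ioo (ha : 0 < a) {x y z : ℝ} :
    x ∈ Ioo (y * a) (z * a) ↔ x / a ∈ Ioo y z := by
  rw [mem_Ioo, mem_Ioo, lt_div_iff₀ ha, div_lt_iff₀ ha]

lemma lineMap_div (x y t : ℝ) : lineMap x y t / a = lineMap (x / a) (y / a) t := by
  simp only [AffineMap.lineMap_apply_ring]
  ring

lemma mem_visitedTiles_iff (ha : 0 < a) (hb : 0 < b) {kl : ℤ × ℤ} :
    kl ∈ visitedTiles a b p q ↔ ∃ t ∈ Icc (0 : ℝ) 1,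
      lineMap (p.1 / a) (q.1 / a) t ∈ Ioo (kl.1 : ℝ) (kl.1 + 1) ∧
      lineMap (p.2 / b) (q.2 / b) t ∈ Ioo (kl.2 : ℝ) (kl.2 + 1) := by
  simp only [visitedTiles, tileInt, segment_eq_image_lineMap, mem_ofPred_eq, Set.Nonempty,
    mem_inter_iff, exists_mem_image, mem_prod, AffineMap.fst_lineMap, AffineMap.snd_lineMap,
    mem_Ioo_mul_iff_div_mem_Ioo ha, mem_Ioo_mul_iff_div_mem_Ioo hb, lineMap_div]

lemma exists_floor_lineMap_eq_of_mem_visitedTiles (ha : 0 < a) (hb : 0 < b) {kl : ℤ × ℤ}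
    (hkl : kl ∈ visitedTiles a b p q) : ∃ t ∈ Icc (0 : ℝ) 1,
      ⌊lineMap (p.1 / a) (q.1 / a) t⌋ = kl.1 ∧ ⌊lineMap (p.2 / b) (q.2 / b) t⌋ = kl.2 := by
  obtain ⟨t, ht, hx, hy⟩ := (mem_visitedTiles_iff ha hb).1 hkl
  exact ⟨t, ht, Int.floor_eq_iff.2 ⟨hx.1.le, hx.2⟩, Int.floor_eq_iff.2 ⟨hy.1.le, hy.2⟩⟩

end VisitedTiles

section UpperBound

lemma finite_and_ncard_le_of_injOn_of_sub_le {α : Type*} {s : Set α} {f : α → ℤ} {D : ℕ}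
    (hf : InjOn f s) (hD : ∀ u ∈ s, ∀ v ∈ s, f v - f u ≤ D) : s.Finite ∧ s.ncard ≤ D + 1 := by
  rcases s.eq_empty_or_nonempty with rfl | ⟨w, hw⟩
  · simp
  obtain ⟨_, ⟨u, hu, rfl⟩, hmin⟩ := Int.exists_least_of_bdd (P := (· ∈ f '' s))
    ⟨f w - D, by rintro _ ⟨u, hu, rfl⟩; linarith [hD u hu w hw]⟩ ⟨f w, w, hw, rfl⟩
  have hmaps : MapsTo f s (Icc (f u) (f u + D)) := fun v hv =>
    ⟨hmin _ ⟨v, hv, rfl⟩, by linarith [hD u hu v hv]⟩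
  refine ⟨.of_injOn hmaps hf (finite_Icc _ _), ?_⟩
  calc s.ncard ≤ (Icc (f u) (f u + D)).ncard := ncard_le_ncard_of_injOn f hmaps hf (finite_Icc _ _)
    _ = D + 1 := by
      rw [← Finset.coe_Icc, ncard_coe_finset, Int.card_Icc]
      omega

lemma exists_unit_monotone_mul_floor_lineMap (x y : ℝ) :
    ∃ s : ℤˣ, Monotone fun t : ℝ => (s : ℤ) * ⌊lineMap x y t⌋ := by
  rcases le_total x y with h | h
  · refine ⟨1, ?_⟩
    simpa using! Int.floor_mono.comp (AffineMap.lineMap_mono h)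
  · refine ⟨-1, ?_⟩
    simpa using (Int.floor_mono.comp_antitone (AffineMap.lineMap_anti h)).neg

lemma floor_sub_floor_le_ceil_abs_sub (u v : ℝ) : ⌊u⌋ - ⌊v⌋ ≤ ⌈|u - v|⌉ := by
  rw [sub_le_iff_le_add', ← Int.floor_add_intCast]
  exact Int.floor_mono (by linarith [le_abs_self (u - v), Int.le_ceil |u - v|])

lemma abs_lineMap_sub_lineMap_le (x y : ℝ) {t t' : ℝ} (ht : t ∈ Icc (0 : ℝ) 1)
    (ht' : t' ∈ Icc (0 : ℝ) 1) : |lineMap x y t' - lineMap x y t| ≤ |x - y| := by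
  rw [← Real.dist_eq, ← Real.dist_eq, dist_lineMap_lineMap]
  exact mul_le_of_le_one_left dist_nonneg (Real.dist_le_of_mem_Icc_01 ht' ht)

lemma abs_floor_lineMap_sub_floor_lineMap_le (x y : ℝ) {t t' : ℝ} (ht : t ∈ Icc (0 : ℝ) 1)
    (ht' : t' ∈ Icc (0 : ℝ) 1) : |⌊lineMap x y t'⌋ - ⌊lineMap x y t⌋| ≤ ⌈|x - y|⌉₊ := by
  rw [Int.natCast_ceil_eq_ceil (abs_nonneg _), abs_sub_le_iff]
  exact ⟨(floor_sub_floor_le_ceil_abs_sub _ _).trans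
      (Int.ceil_mono (abs_lineMap_sub_lineMap_le x y ht ht')),
    (floor_sub_floor_le_ceil_abs_sub _ _).trans
      (Int.ceil_mono (abs_lineMap_sub_lineMap_le x y ht' ht))⟩

lemma units_mul_sub_le_abs (s : ℤˣ) (k k' : ℤ) : s * k' - s * k ≤ |k' - k| := by
  rw [← mul_sub]
  exact (le_abs_self _).trans_eq (by rw [abs_mul, Int.isUnit_iff_abs_eq.1 s.isUnit, one_mul])

variable {a b : ℝ}

lemma visitedTiles_finite_and_ncard_le (ha : 0 < a) (hb : 0 < b) (p q : ℝ × ℝ) :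
    (visitedTiles a b p q).Finite ∧ (visitedTiles a b p q).ncard ≤
      ⌈|p.1 / a - q.1 / a|⌉₊ + ⌈|p.2 / b - q.2 / b|⌉₊ + 1 := by
  obtain ⟨s, hs⟩ := exists_unit_monotone_mul_floor_lineMap (p.1 / a) (q.1 / a)
  obtain ⟨s', hs'⟩ := exists_unit_monotone_mul_floor_lineMap (p.2 / b) (q.2 / b)
  refine finite_and_ncard_le_of_injOn_of_sub_le (f := fun kl => s * kl.1 + s' * kl.2) ?_ ?_
  · rintro ⟨k, l⟩ hkl ⟨k', l'⟩ hkl' hsum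
    obtain ⟨t, -, rfl, rfl⟩ := exists_floor_lineMap_eq_of_mem_visitedTiles ha hb hkl
    obtain ⟨t', -, rfl, rfl⟩ := exists_floor_lineMap_eq_of_mem_visitedTiles ha hb hkl'
    have hfst : s * ⌊lineMap (p.1 / a) (q.1 / a) t⌋ = s * ⌊lineMap (p.1 / a) (q.1 / a) t'⌋ := by
      rcases le_total t t' with htt' | htt' <;> linarith [hs htt', hs' htt']
    exact Prod.ext (mul_left_cancel₀ s.ne_zero hfst)
      (mul_left_cancel₀ s'.ne_zero (by linarith))
  · rintro ⟨k, l⟩ hkl ⟨k', l'⟩ hkl'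
    obtain ⟨t, ht, rfl, rfl⟩ := exists_floor_lineMap_eq_of_mem_visitedTiles ha hb hkl
    obtain ⟨t', ht', rfl, rfl⟩ := exists_floor_lineMap_eq_of_mem_visitedTiles ha hb hkl'
    push_cast
    linarith [units_mul_sub_le_abs s _ _ |>.trans
        (abs_floor_lineMap_sub_floor_lineMap_le (p.1 / a) (q.1 / a) ht ht'),
      units_mul_sub_le_abs s' _ _ |>.trans
        (abs_floor_lineMap_sub_floor_lineMap_le (p.2 / b) (q.2 / b) ht ht')]

lemma visitCount_le (ha : 0 < a) (hb : 0 < b) (p q : ℝ × ℝ) :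
    visitCount a b p q ≤ ⌈|p.1 - q.1| / a⌉₊ + ⌈|p.2 - q.2| / b⌉₊ + 1 := by
  have h := (visitedTiles_finite_and_ncard_le ha hb p q).2
  rwa [← sub_div, ← sub_div, abs_div, abs_div, abs_of_pos ha, abs_of_pos hb] at h

lemma segLen_sq (p q : ℝ × ℝ) : segLen p q ^ 2 = |p.1 - q.1| ^ 2 + |p.2 - q.2| ^ 2 := by
  rw [segLen, Real.sq_sqrt (by positivity), sq_abs, sq_abs]

lemma abs_fst_sub_le_segLen (p q : ℝ × ℝ) : |p.1 - q.1| ≤ segLen p q :=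
  Real.abs_le_sqrt (le_add_of_nonneg_right (sq_nonneg _))

lemma abs_snd_sub_le_segLen (p q : ℝ × ℝ) : |p.2 - q.2| ≤ segLen p q :=
  Real.abs_le_sqrt (le_add_of_nonneg_left (sq_nonneg _))

lemma bddAbove_visitCount (ha : 0 < a) (hb : 0 < b) (ℓ : ℝ) :
    BddAbove {n : ℕ | ∃ p q : ℝ × ℝ, segLen p q = ℓ ∧ visitCount a b p q = n} := by
  refine ⟨⌈ℓ / a⌉₊ + ⌈ℓ / b⌉₊ + 1, ?_⟩
  rintro _ ⟨p, q, rfl, rfl⟩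
  refine (visitCount_le ha hb p q).trans ?_
  gcongr
  exacts [abs_fst_sub_le_segLen p q, abs_snd_sub_le_segLen p q]

lemma natCeil_div_sub_one_mul_lt (ha : 0 < a) {d : ℝ} (hd : 0 < d) :
    ((⌈d / a⌉₊ - 1 : ℕ) : ℝ) * a < d := by
  rw [← lt_div_iff₀ ha, ← Nat.lt_ceil]
  exact Nat.sub_one_lt (Nat.ceil_pos.2 (div_pos hd ha)).ne'

lemma natCeil_div_sub_one_mul_le (ha : 0 < a) {d : ℝ} (hd : 0 ≤ d) :
    ((⌈d / a⌉₊ - 1 : ℕ) : ℝ) * a ≤ d := by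
  rcases hd.eq_or_lt with rfl | hd
  · simp
  · exact (natCeil_div_sub_one_mul_lt ha hd).le

lemma exists_visitCount_le_and_sq_add_sq_lt (ha : 0 < a) (hb : 0 < b) {p q : ℝ × ℝ}
    (hpq : 0 < segLen p q) : ∃ i j : ℕ,
      visitCount a b p q ≤ i + j + 3 ∧ (i * a) ^ 2 + (j * b) ^ 2 < segLen p q ^ 2 := by
  refine ⟨⌈|p.1 - q.1| / a⌉₊ - 1, ⌈|p.2 - q.2| / b⌉₊ - 1,
    (visitCount_le ha hb p q).trans (by omega), ?_⟩
  rw [segLen_sq]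
  rcases (abs_nonneg (p.1 - q.1)).eq_or_lt with hx | hx
  · have hy : 0 < |p.2 - q.2| := by
      refine (abs_nonneg _).lt_of_ne fun hy => ?_
      have := segLen_sq p q
      rw [← hx, ← hy] at this
      nlinarith
    refine add_lt_add_of_le_of_lt ?_ ?_ <;> gcongr
    exacts [natCeil_div_sub_one_mul_le ha hx.le, natCeil_div_sub_one_mul_lt hb hy]
  · refine add_lt_add_of_lt_of_le ?_ ?_ <;> gcongr
    exacts [natCeil_div_sub_one_mul_lt ha hx, natCeil_div_sub_one_mul_le hb (abs_nonneg _)]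

end UpperBound

section StaircasePaths

/-- The plane curve `t ↦ (f t, g t)` passes through no point of the lattice `ℤ²`. Where both
coordinates increase, such a curve crosses the lines of the unit grid one at a time. -/
def AvoidsLattice (f g : ℝ → ℝ) : Prop :=
  ∀ t, ∀ c d : ℤ, f t = c → g t ≠ d

variable {f g : ℝ → ℝ} {t T : ℝ} {k l : ℤ}

lemma AvoidsLattice.swap (h : AvoidsLattice f g) : AvoidsLattice g f :=
  fun t c d hc hd => h t d c hd hc

lemma exists_mem_tile_after_crossing (hf : StrictMono f) (hfc : Continuous f) (hgc : Continuous g)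
    (htT : t < T) (hft : f t = k) (hgt : g t ∈ Ioo (l : ℝ) (l + 1)) :
    ∃ t' ∈ Icc t T, f t' ∈ Ioo (k : ℝ) (k + 1) ∧ g t' ∈ Ioo (l : ℝ) (l + 1) := by
  have hf_lt : ∀ᶠ u in 𝓝[>] t, f u < k + 1 :=
    nhdsWithin_le_nhds (hfc.continuousAt.eventually_lt_const (by linarith))
  have hg_mem : ∀ᶠ u in 𝓝[>] t, g u ∈ Ioo (l : ℝ) (l + 1) :=
    nhdsWithin_le_nhds (hgc.continuousAt.eventually_mem (isOpen_Ioo.mem_nhds hgt))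
  obtain ⟨t', hft', hgt', ht'⟩ := (hf_lt.and (hg_mem.and (Ioc_mem_nhdsGT htT))).exists
  exact ⟨t', Ioc_subset_Icc_self ht', ⟨hft ▸ hf ht'.1, hft'⟩, hgt'⟩

lemma exists_mem_next_tile_of_lt (hf : StrictMono f) (hg : StrictMono g) (hfc : Continuous f)
    (hgc : Continuous g) (hfg : AvoidsLattice f g) (htT : t ≤ T)
    (hft : f t ∈ Ioo (k : ℝ) (k + 1)) (hgt : g t ∈ Ioo (l : ℝ) (l + 1)) (hfT : k + 1 < f T) :
    ∃ t' ∈ Icc t T, ∃ k' l' : ℤ, k' + l' = k + l + 1 ∧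
      f t' ∈ Ioo (k' : ℝ) (k' + 1) ∧ g t' ∈ Ioo (l' : ℝ) (l' + 1) := by
  obtain ⟨u, ⟨htu, huT⟩, hfu⟩ := intermediate_value_Ioo htT hfc.continuousOn ⟨hft.2, hfT⟩
  rcases lt_trichotomy (g u) (l + 1) with hgu | hgu | hgu
  · obtain ⟨t', ht', hft', hgt'⟩ := exists_mem_tile_after_crossing (k := k + 1) hf hfc hgc huT
      (by exact_mod_cast hfu) ⟨hgt.1.trans (hg htu), hgu⟩
    exact ⟨t', Icc_subset_Icc_left htu.le ht', k + 1, l, by ring, hft', hgt'⟩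
  · exact absurd (by exact_mod_cast hgu) (hfg u (k + 1) (l + 1) (by exact_mod_cast hfu))
  · obtain ⟨v, ⟨htv, hvu⟩, hgv⟩ := intermediate_value_Ioo htu.le hgc.continuousOn ⟨hgt.2, hgu⟩
    obtain ⟨t', ht', hgt', hft'⟩ := exists_mem_tile_after_crossing (k := l + 1) hg hgc hfc
      (hvu.trans huT) (by exact_mod_cast hgv) ⟨hft.1.trans (hf htv), hfu ▸ hf hvu⟩
    exact ⟨t', Icc_subset_Icc_left htv.le ht', k, l + 1, by ring, hft', hgt'⟩

lemma exists_mem_tile_of_sum_mem_Icc (hf : StrictMono f) (hg : StrictMono g) (hfc : Continuous f)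
    (hgc : Continuous g) (hfg : AvoidsLattice f g) (htT : t ≤ T)
    (hft : f t ∈ Ioo (k : ℝ) (k + 1)) (hgt : g t ∈ Ioo (l : ℝ) (l + 1)) {k₁ l₁ : ℤ}
    (hfT : k₁ < f T) (hgT : l₁ < g T) {n : ℤ} (hn : n ∈ Icc (k + l) (k₁ + l₁)) :
    ∃ t' ∈ Icc t T, ∃ k' l' : ℤ, k' + l' = n ∧
      f t' ∈ Ioo (k' : ℝ) (k' + 1) ∧ g t' ∈ Ioo (l' : ℝ) (l' + 1) := by
  obtain ⟨hn₀, hn₁⟩ := hn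
  induction n, hn₀ using Int.leInduction with
  | base => exact ⟨t, left_mem_Icc.2 htT, k, l, rfl, hft, hgt⟩
  | succ n _ ih =>
    obtain ⟨u, hu, k', l', rfl, hfu, hgu⟩ := ih (by omega)
    rcases (by omega : k' + 1 ≤ k₁ ∨ l' + 1 ≤ l₁) with hk | hl
    · have hfT' : (k' : ℝ) + 1 < f T := lt_of_le_of_lt (by exact_mod_cast hk) hfT
      obtain ⟨t', ht', h⟩ := exists_mem_next_tile_of_lt hf hg hfc hgc hfg hu.2 hfu hgu hfT'
      exact ⟨t', Icc_subset_Icc_left hu.1 ht', h⟩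
    · have hgT' : (l' : ℝ) + 1 < g T := lt_of_le_of_lt (by exact_mod_cast hl) hgT
      obtain ⟨t', ht', l'', k'', hsum, hgt', hft'⟩ := exists_mem_next_tile_of_lt hg hf hgc hfc
        hfg.swap hu.2 hgu hfu hgT'
      exact ⟨t', Icc_subset_Icc_left hu.1 ht', k'', l'', by omega, hft', hgt'⟩

end StaircasePaths

section LowerBound

-- Each lattice point lies on at most one line through `(x₁, y₁)`, so only countably many `y₀` fail.
lemma exists_mem_Ioo_avoidsLattice_lineMap (x₀ : ℝ) {x₁ : ℝ} (hx₁ : ∀ c : ℤ, x₁ ≠ c) (y₁ : ℝ)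
    {y y' : ℝ} (hy : y < y') :
    ∃ y₀ ∈ Ioo y y', AvoidsLattice (lineMap x₀ x₁) (lineMap y₀ y₁) := by
  let bad : ℤ × ℤ → ℝ := fun cd => y₁ + (x₁ - x₀) * (cd.2 - y₁) / (x₁ - cd.1)
  obtain ⟨y₀, hy₀, hgood⟩ := ((countable_range bad).dense_compl ℝ).exists_mem_open isOpen_Ioo
    (nonempty_Ioo.2 hy)
  refine ⟨y₀, hgood, fun t c d hc hd => hy₀ ⟨(c, d), ?_⟩⟩
  have hne : x₁ - c ≠ 0 := sub_ne_zero.2 (hx₁ c)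
  rw [AffineMap.lineMap_apply_ring] at hc hd
  simp only [bad]
  field_simp
  rw [← hc, ← hd]
  ring

lemma lineMap_strictMono {x y : ℝ} (h : x < y) : StrictMono (lineMap (k := ℝ) x y) :=
  fun _ _ => (lineMap_lt_lineMap_iff_of_lt' h).2

variable {a b : ℝ} {p q : ℝ × ℝ}

lemma le_visitCount_of_avoidsLattice (ha : 0 < a) (hb : 0 < b) {x₀ y₀ x₁ y₁ : ℝ} (hx : x₀ < x₁)
    (hy : y₀ < y₁) (hfree : AvoidsLattice (lineMap x₀ x₁) (lineMap y₀ y₁)) {k₀ l₀ k₁ l₁ : ℤ}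
    (hx₀ : x₀ ∈ Ioo (k₀ : ℝ) (k₀ + 1)) (hy₀ : y₀ ∈ Ioo (l₀ : ℝ) (l₀ + 1))
    (hx₁ : k₁ < x₁) (hy₁ : l₁ < y₁) :
    k₁ + l₁ - (k₀ + l₀) + 1 ≤ visitCount a b (x₀ * a, y₀ * b) (x₁ * a, y₁ * b) := by
  set V := visitedTiles a b (x₀ * a, y₀ * b) (x₁ * a, y₁ * b)
  have hfin : V.Finite := (visitedTiles_finite_and_ncard_le ha hb _ _).1
  have hsub : Icc (k₀ + l₀) (k₁ + l₁) ⊆ (fun kl : ℤ × ℤ => kl.1 + kl.2) '' V := by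
    intro n hn
    obtain ⟨t, ht, k, l, hsum, hkl⟩ := exists_mem_tile_of_sum_mem_Icc (t := 0) (T := 1)
      (lineMap_strictMono hx) (lineMap_strictMono hy)
      AffineMap.lineMap_continuous AffineMap.lineMap_continuous hfree zero_le_one
      (by simpa using hx₀) (by simpa using hy₀) (by simpa using hx₁) (by simpa using hy₁) hn
    refine ⟨(k, l), (mem_visitedTiles_iff ha hb).2 ⟨t, ht, ?_⟩, hsum⟩
    simpa only [mul_div_cancel_right₀ _ ha.ne', mul_div_cancel_right₀ _ hb.ne'] using hkl
  have hcard : (Icc (k₀ + l₀) (k₁ + l₁)).ncard ≤ V.ncard :=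
    (ncard_le_ncard hsub (hfin.image _)).trans (ncard_image_le hfin)
  rw [← Finset.coe_Icc, ncard_coe_finset, Int.card_Icc] at hcard
  change _ ≤ (V.ncard : ℤ)
  omega

lemma exists_segLen_eq_and_segment_subset {ℓ : ℝ} (h₀ : 0 < segLen p q) (h : segLen p q ≤ ℓ) :
    ∃ q' : ℝ × ℝ, segLen p q' = ℓ ∧ segment ℝ p q ⊆ segment ℝ p q' := by
  set r : ℝ := ℓ / segLen p q
  have hr₁ : 1 ≤ r := (one_le_div h₀).2 h
  have hr₀ : 0 < r := one_pos.trans_le hr₁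
  refine ⟨lineMap p q r, ?_, (convex_segment _ _).segment_subset (left_mem_segment ℝ _ _) ?_⟩
  · calc segLen p (lineMap p q r)
        = √(r ^ 2 * ((p.1 - q.1) ^ 2 + (p.2 - q.2) ^ 2)) := by
          simp only [segLen, AffineMap.fst_lineMap, AffineMap.snd_lineMap,
            AffineMap.lineMap_apply_ring]
          ring_nf
      _ = r * segLen p q := by rw [Real.sqrt_mul (sq_nonneg r), Real.sqrt_sq hr₀.le, segLen]
      _ = ℓ := div_mul_cancel₀ ℓ h₀.ne'
  · rw [segment_eq_image_lineMap]
    refine ⟨r⁻¹, ⟨inv_nonneg.2 hr₀.le, inv_le_one_of_one_le₀ hr₁⟩, ?_⟩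
    rw [AffineMap.lineMap_lineMap_right, inv_mul_cancel₀ hr₀.ne', AffineMap.lineMap_apply_one]

lemma exists_mem_Ioo_sq_add_sq_lt {x y c : ℝ} (h : (x * a) ^ 2 + (y * b) ^ 2 < c) :
    ∃ ε ∈ Ioo (0 : ℝ) 1, ((x + 2 * ε) * a) ^ 2 + ((y + 2 * ε) * b) ^ 2 < c := by
  have hcont : Continuous fun ε : ℝ => ((x + 2 * ε) * a) ^ 2 + ((y + 2 * ε) * b) ^ 2 := by fun_prop
  have hlt : ∀ᶠ ε in 𝓝[>] (0 : ℝ), ((x + 2 * ε) * a) ^ 2 + ((y + 2 * ε) * b) ^ 2 < c :=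
    nhdsWithin_le_nhds (hcont.continuousAt.eventually_lt_const (by simpa using h))
  obtain ⟨ε, hεlt, hε⟩ := (hlt.and (Ioo_mem_nhdsGT one_pos)).exists
  exact ⟨ε, hε, hεlt⟩

lemma natCast_add_ne_intCast {ε : ℝ} (hε : ε ∈ Ioo (0 : ℝ) 1) (n : ℕ) (c : ℤ) : n + ε ≠ c := by
  intro hc
  have hlt : (n : ℤ) < c := by exact_mod_cast (by linarith [hε.1] : (n : ℝ) < c)
  have hgt : c < (n : ℤ) + 1 := by exact_mod_cast (by linarith [hε.2] : (c : ℝ) < n + 1)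
  omega

lemma exists_segLen_le_and_le_visitCount (ha : 0 < a) (hb : 0 < b) {ℓ : ℝ} (hℓ : 0 < ℓ) {i j : ℕ}
    (h : (i * a) ^ 2 + (j * b) ^ 2 < ℓ ^ 2) : ∃ p q : ℝ × ℝ,
      0 < segLen p q ∧ segLen p q ≤ ℓ ∧ i + j + 3 ≤ visitCount a b p q := by
  obtain ⟨ε, hε, hlt⟩ := exists_mem_Ioo_sq_add_sq_lt h
  obtain ⟨η, ⟨hη, hη₀⟩, hfree⟩ := exists_mem_Ioo_avoidsLattice_lineMap (-ε)
    (natCast_add_ne_intCast hε i) (j + ε) (neg_lt_zero.2 hε.1)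
  obtain ⟨hε₀, hε₁⟩ := hε
  have hx : -ε < i + ε := by linarith [i.cast_nonneg (α := ℝ)]
  have hy : η < j + ε := by linarith [j.cast_nonneg (α := ℝ)]
  refine ⟨(-ε * a, η * b), ((i + ε) * a, (j + ε) * b), ?_, Real.sqrt_le_iff.2 ⟨hℓ.le, ?_⟩, ?_⟩
  · refine lt_of_lt_of_le (abs_pos.2 ?_) (abs_fst_sub_le_segLen _ _)
    exact sub_ne_zero.2 (mul_lt_mul_of_pos_right hx ha).ne
  · calc (-ε * a - (i + ε) * a) ^ 2 + (η * b - (j + ε) * b) ^ 2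
        = ((i + 2 * ε) * a) ^ 2 + ((j + ε - η) * b) ^ 2 := by ring
      _ ≤ ((i + 2 * ε) * a) ^ 2 + ((j + 2 * ε) * b) ^ 2 := by
        have hηε : (j + ε - η) * b ≤ (j + 2 * ε) * b :=
          mul_le_mul_of_nonneg_right (by linarith) hb.le
        have hη_nonneg : 0 ≤ (j + ε - η) * b := mul_nonneg (by linarith) hb.le
        linarith [pow_le_pow_left₀ hη_nonneg hηε 2]
      _ ≤ ℓ ^ 2 := hlt.le
  · have hcount := le_visitCount_of_avoidsLattice ha hb hx hy hfree (k₀ := -1) (l₀ := -1)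
      (k₁ := i) (l₁ := j) ⟨by push_cast; linarith, by push_cast; linarith⟩
      ⟨by push_cast; linarith, by push_cast; linarith⟩ (by simpa using hε₀) (by simpa using hε₀)
    omega

lemma exists_segLen_eq_and_le_visitCount (ha : 0 < a) (hb : 0 < b) {ℓ : ℝ} (hℓ : 0 < ℓ) {i j : ℕ}
    (h : (i * a) ^ 2 + (j * b) ^ 2 < ℓ ^ 2) :
    ∃ p q : ℝ × ℝ, segLen p q = ℓ ∧ i + j + 3 ≤ visitCount a b p q := by
  obtain ⟨p, q, hpos, hlen, hcount⟩ := exists_segLen_le_and_le_visitCount ha hb hℓ h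
  obtain ⟨q', hq', hsub⟩ := exists_segLen_eq_and_segment_subset hpos hlen
  exact ⟨p, q', hq', hcount.trans
    (ncard_le_ncard (visitedTiles_mono hsub) (visitedTiles_finite_and_ncard_le ha hb p q').1)⟩

end LowerBound

section MaxTiles

variable {a b ℓ : ℝ}

lemma le_maxTiles_iff_exists_segment (ha : 0 < a) (hb : 0 < b) (hℓ : 0 < ℓ) {N : ℕ} :
    N ≤ maxTiles a b ℓ ↔ ∃ p q : ℝ × ℝ, segLen p q = ℓ ∧ N ≤ visitCount a b p q := by
  constructor
  · intro h
    have hne : {n : ℕ | ∃ p q : ℝ × ℝ, segLen p q = ℓ ∧ visitCount a b p q = n}.Nonempty :=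
      ⟨_, (0, 0), (ℓ, 0), by simp [segLen, Real.sqrt_sq hℓ.le], rfl⟩
    obtain ⟨p, q, hpq, hcount⟩ := Nat.sSup_mem hne (bddAbove_visitCount ha hb ℓ)
    exact ⟨p, q, hpq, h.trans_eq hcount.symm⟩
  · rintro ⟨p, q, hpq, h⟩
    exact h.trans (le_csSup (bddAbove_visitCount ha hb ℓ) ⟨p, q, hpq, rfl⟩)

theorem le_maxTiles_iff (ha : 0 < a) (hb : 0 < b) (hℓ : 0 < ℓ) {N : ℕ} :
    N ≤ maxTiles a b ℓ ↔
      ∃ i j : ℕ, N ≤ i + j + 3 ∧ (i * a) ^ 2 + (j * b) ^ 2 < ℓ ^ 2 := by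
  rw [le_maxTiles_iff_exists_segment ha hb hℓ]
  constructor
  · rintro ⟨p, q, rfl, hN⟩
    obtain ⟨i, j, hcount, hlt⟩ := exists_visitCount_le_and_sq_add_sq_lt ha hb hℓ
    exact ⟨i, j, hN.trans hcount, hlt⟩
  · rintro ⟨i, j, hN, hlt⟩
    obtain ⟨p, q, hpq, hcount⟩ := exists_segLen_eq_and_le_visitCount ha hb hℓ hlt
    exact ⟨p, q, hpq, hN.trans hcount⟩

end MaxTiles

section UnitGrid

lemma two_mul_sq_le_sq_add_sq {i j m : ℕ} (h : 2 * m ≤ i + j) : 2 * m ^ 2 ≤ i ^ 2 + j ^ 2 := by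
  zify at h ⊢
  nlinarith [sq_nonneg ((i : ℤ) - j)]

lemma sq_add_succ_sq_le_sq_add_sq {i j m : ℕ} (h : 2 * m + 1 ≤ i + j) :
    m ^ 2 + (m + 1) ^ 2 ≤ i ^ 2 + j ^ 2 := by
  have hi := Int.le_self_sq (i - m)
  have hj := Int.le_self_sq (j - m)
  zify at h ⊢
  nlinarith

lemma two_mul_add_three_le_maxTiles_iff {ℓ : ℝ} (hℓ : 0 < ℓ) (m : ℕ) :
    2 * m + 3 ≤ maxTiles 1 1 ℓ ↔ 2 * (m : ℝ) / √2 < ℓ := by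
  have hthreshold : 2 * (m : ℝ) / √2 < ℓ ↔ 2 * (m : ℝ) ^ 2 < ℓ ^ 2 := by
    rw [← pow_lt_pow_iff_left₀ (by positivity) hℓ.le two_ne_zero, div_pow, Real.sq_sqrt zero_le_two]
    ring_nf
  rw [le_maxTiles_iff one_pos one_pos hℓ, hthreshold]
  simp only [mul_one]
  constructor
  · rintro ⟨i, j, hij, hlt⟩
    refine lt_of_le_of_lt ?_ hlt
    exact_mod_cast two_mul_sq_le_sq_add_sq (by omega)
  · exact fun hlt => ⟨m, m, by omega, by linarith⟩

lemma two_mul_add_four_le_maxTiles_iff {ℓ : ℝ} (hℓ : 0 < ℓ) (m : ℕ) :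
    2 * m + 4 ≤ maxTiles 1 1 ℓ ↔ √((2 * m) ^ 2 + (2 * m + 2) ^ 2) / 2 < ℓ := by
  have hthreshold : √((2 * m) ^ 2 + (2 * m + 2) ^ 2) / 2 < ℓ ↔
      (m : ℝ) ^ 2 + (m + 1) ^ 2 < ℓ ^ 2 := by
    rw [← pow_lt_pow_iff_left₀ (by positivity) hℓ.le two_ne_zero, div_pow,
      Real.sq_sqrt (by positivity)]
    ring_nf
  rw [le_maxTiles_iff one_pos one_pos hℓ, hthreshold]
  simp only [mul_one]
  constructor
  · rintro ⟨i, j, hij, hlt⟩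
    refine lt_of_le_of_lt ?_ hlt
    exact_mod_cast sq_add_succ_sq_le_sq_add_sq (by omega)
  · exact fun hlt => ⟨m, m + 1, by omega, by exact_mod_cast hlt⟩

end UnitGrid

theorem stmt_13 (ℓ : ℝ) (hℓ : 0 < ℓ) :
    (∀ N : ℕ, Odd N → 3 ≤ N →
      (maxTiles 1 1 ℓ = N ↔
        ((N : ℝ) - 3) / Real.sqrt 2 < ℓ ∧
          ℓ ≤ Real.sqrt (((N : ℝ) - 3) ^ 2 + ((N : ℝ) - 1) ^ 2) / 2)) ∧
    (∀ N : ℕ, Even N → 4 ≤ N →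
      (maxTiles 1 1 ℓ = N ↔
        Real.sqrt (((N : ℝ) - 4) ^ 2 + ((N : ℝ) - 2) ^ 2) / 2 < ℓ ∧
          ℓ ≤ ((N : ℝ) - 2) / Real.sqrt 2)) := by
  refine ⟨fun N hN hN₃ => ?_, fun N hN hN₄ => ?_⟩
  · obtain ⟨m, rfl⟩ : ∃ m, N = 2 * m + 3 := by
      obtain ⟨k, rfl⟩ := hN
      exact ⟨k - 1, by omega⟩
    have hsub₃ : ((2 * m + 3 : ℕ) : ℝ) - 3 = 2 * m := by push_cast; ring
    have hsub₁ : ((2 * m + 3 : ℕ) : ℝ) - 1 = 2 * m + 2 := by push_cast; ring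
    rw [hsub₃, hsub₁, ← not_lt (b := ℓ), ← two_mul_add_three_le_maxTiles_iff hℓ,
      ← two_mul_add_four_le_maxTiles_iff hℓ]
    omega
  · obtain ⟨m, rfl⟩ : ∃ m, N = 2 * m + 4 := by
      obtain ⟨k, rfl⟩ := hN
      exact ⟨k - 2, by omega⟩
    have hsub₄ : ((2 * m + 4 : ℕ) : ℝ) - 4 = 2 * m := by push_cast; ring
    have hsub₂ : ((2 * m + 4 : ℕ) : ℝ) - 2 = 2 * m + 2 := by push_cast; ring
    have hsucc : (2 * m + 2 : ℝ) = 2 * (m + 1 : ℕ) := by push_cast; ring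
    rw [hsub₄, hsub₂, ← two_mul_add_four_le_maxTiles_iff hℓ, hsucc, ← not_lt (b := ℓ),
      ← two_mul_add_three_le_maxTiles_iff hℓ]
    omega
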